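/- Let G be a graph with independence number α = α(G), let t ≥ 8·4^α be an integer and t' = 4t². Let M be a perfect matching of G and 𝒞 a set of vertex-disjoint M-alternating cycles containing a cycle C ∈ 𝒞 such that |w_M(𝒞)| ≤ t' and |w_M(C)| ≥ 2t'. Then 𝒞 contains a 0-skip-cycle set. -/

import Mathlib

open Finset

/-- `M` is (the edge set of) a perfect matching of `G`: all its edges are edges of `G` and
every vertex belongs to exactly one edge of `M`. -/
def IsPM {V : Type*} [DecidableEq V] (G : SimpleGraph V) (M : Finset (Sym2 V)) : Prop :=
  ↑M ⊆ G.edgeSet ∧ ∀ v : V, ∃! e, e ∈ M ∧ v ∈ e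

/-- Number of red edges in the edge set `F` (the coloring `red` marks the red edges). -/
def redCount {V : Type*} [DecidableEq V] (red : Sym2 V → Bool) (F : Finset (Sym2 V)) : ℕ :=
  (F.filter fun e => red e = true).card

/-- Number of blue edges in the edge set `F`. -/
def blueCount {V : Type*} [DecidableEq V] (red : Sym2 V → Bool) (F : Finset (Sym2 V)) : ℕ :=
  (F.filter fun e => red e = false).card

/-- The weight `w_M(e)`: 0 for blue edges, +1 for red non-matching edges, −1 for red
matching edges. -/
def wt {V : Type*} [DecidableEq V] (red : Sym2 V → Bool) (M : Finset (Sym2 V))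
    (e : Sym2 V) : ℤ :=
  if red e then (if e ∈ M then -1 else 1) else 0

/-- `w_M(F)`, the total weight of an edge set `F`. -/
def wSum {V : Type*} [DecidableEq V] (red : Sym2 V → Bool) (M F : Finset (Sym2 V)) : ℤ :=
  ∑ e ∈ F, wt red M e

/-- A list of edges alternates with respect to the matching `M`: consecutive edges are
alternately in and out of `M`. -/
def altList {V : Type*} [DecidableEq V] (M : Finset (Sym2 V)) (l : List (Sym2 V)) : Prop :=
  l.Chain' fun e f => ¬((e ∈ M) ↔ (f ∈ M))

/-- `C` is (the edge set of) an `M`-alternating cycle in `G`: it is traced by a cycle walk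
whose edges alternate (cyclically) between `M` and non-`M` edges. -/
def IsAltCycle {V : Type*} [DecidableEq V] (G : SimpleGraph V)
    (M C : Finset (Sym2 V)) : Prop :=
  ∃ (v : V) (p : G.Walk v v), p.IsCycle ∧ p.edges.toFinset = C ∧
    altList M (p.edges ++ p.edges.take 1)

/-- `P` is (the edge set of) an `M`-alternating path in `G`. -/
def IsAltPath {V : Type*} [DecidableEq V] (G : SimpleGraph V)
    (M P : Finset (Sym2 V)) : Prop :=
  ∃ (u v : V) (p : G.Walk u v), p.IsPath ∧ p.edges.toFinset = P ∧ altList M p.edges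

/-- The symmetric difference of two edge sets. -/
def sd {V : Type*} [DecidableEq V] (M M' : Finset (Sym2 V)) : Finset (Sym2 V) :=
  (M \ M') ∪ (M' \ M)

/-- The set of vertices covered by an edge set. -/
def edgeVerts {V : Type*} (F : Finset (Sym2 V)) : Set V := {v | ∃ e ∈ F, v ∈ e}

/-- `𝒞` is a set of pairwise vertex-disjoint `M`-alternating cycles of `G`. -/
def IsAltCycleSet {V : Type*} [DecidableEq V] (G : SimpleGraph V) (M : Finset (Sym2 V))
    (𝒞 : Finset (Finset (Sym2 V))) : Prop :=
  (∀ C ∈ 𝒞, IsAltCycle G M C) ∧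
    (𝒞 : Set (Finset (Sym2 V))).Pairwise fun C C' => Disjoint (edgeVerts C) (edgeVerts C')

/-- A skip on the `M`-alternating cycle `C` (with respect to the coloring `red`):
two non-matching chords `e1 ≠ e2` of `C`, not edges of `C`, such that replacing two
stretches of `C` by them yields a strictly shorter `M`-alternating cycle `C'` whose weight
differs from that of `C` by at most 4 in absolute value. -/
structure Skip {V : Type*} [DecidableEq V] (G : SimpleGraph V) (red : Sym2 V → Bool)
    (M C : Finset (Sym2 V)) where
  e1 : Sym2 V
  e2 : Sym2 V
  C' : Finset (Sym2 V)
  hne : e1 ≠ e2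
  he1G : e1 ∈ G.edgeSet
  he2G : e2 ∈ G.edgeSet
  he1M : e1 ∉ M
  he2M : e2 ∉ M
  he1C : e1 ∉ C
  he2C : e2 ∉ C
  halt : IsAltCycle G M C'
  hmem1 : e1 ∈ C'
  hmem2 : e2 ∈ C'
  hsub : C' \ {e1, e2} ⊆ C
  hsmall : C'.card < C.card
  hwbound : |wSum red M C' - wSum red M C| ≤ 4

/-- The weight `w(S) = w_M(C') − w_M(C)` of a skip. -/
def Skip.w {V : Type*} [DecidableEq V] {G : SimpleGraph V} {red : Sym2 V → Bool}
    {M C : Finset (Sym2 V)} (S : Skip G red M C) : ℤ :=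
  wSum red M S.C' - wSum red M C

/-- The skip `S` is contained in the path `P` along `C`: the stretch of `C` removed by
the skip lies on `P`. -/
def Skip.In {V : Type*} [DecidableEq V] {G : SimpleGraph V} {red : Sym2 V → Bool}
    {M C : Finset (Sym2 V)} (S : Skip G red M C) (P : Finset (Sym2 V)) : Prop :=
  C \ S.C' ⊆ P

/-- Two skips on `C` are disjoint: they are contained in disjoint paths along `C`. -/
def Skip.Disj {V : Type*} [DecidableEq V] {G : SimpleGraph V} {red : Sym2 V → Bool}
    {M C : Finset (Sym2 V)} (S1 S2 : Skip G red M C) : Prop :=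
  ∃ P1 P2 : Finset (Sym2 V), P1 ⊆ C ∧ P2 ⊆ C ∧ Disjoint P1 P2 ∧
    IsAltPath G M P1 ∧ IsAltPath G M P2 ∧ S1.In P1 ∧ S2.In P2

/-- A skip living on one of the cycles of the family `𝒞`. -/
structure SkipOn {V : Type*} [DecidableEq V] (G : SimpleGraph V) (red : Sym2 V → Bool)
    (M : Finset (Sym2 V)) (𝒞 : Finset (Finset (Sym2 V))) where
  C : Finset (Sym2 V)
  hC : C ∈ 𝒞
  S : Skip G red M C

/-- Two skips on cycles of `𝒞` are disjoint: either they live on different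
(vertex-disjoint) cycles, or they are disjoint skips on the same cycle. -/
def SkipOn.Disj {V : Type*} [DecidableEq V] {G : SimpleGraph V} {red : Sym2 V → Bool}
    {M : Finset (Sym2 V)} {𝒞 : Finset (Finset (Sym2 V))}
    (T1 T2 : SkipOn G red M 𝒞) : Prop :=
  T1.C ≠ T2.C ∨ ∃ h : T1.C = T2.C, Skip.Disj (h ▸ T1.S) T2.S

/-- `𝒞` contains a 0-skip set: a nonempty collection of pairwise disjoint skips on cycles
of `𝒞` of total weight 0. -/
def HasZeroSkipSet {V : Type*} [DecidableEq V] (G : SimpleGraph V) (red : Sym2 V → Bool)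
    (M : Finset (Sym2 V)) (𝒞 : Finset (Finset (Sym2 V))) : Prop :=
  ∃ L : List (SkipOn G red M 𝒞), L ≠ [] ∧ L.Pairwise SkipOn.Disj ∧
    (L.map fun T => T.S.w).sum = 0

/-- `𝒞` contains a 0-skip-cycle set: a nonempty collection of pairwise disjoint skips on
cycles of `𝒞` and/or whole cycles `D ⊆ 𝒞` (the skips living on cycles not in `D`), such
that the total weight of the skips minus the total weight of the cycles is 0. -/
def HasZeroSkipCycleSet {V : Type*} [DecidableEq V] (G : SimpleGraph V)
    (red : Sym2 V → Bool) (M : Finset (Sym2 V)) (𝒞 : Finset (Finset (Sym2 V))) : Prop :=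
  ∃ (L : List (SkipOn G red M 𝒞)) (D : Finset (Finset (Sym2 V))),
    D ⊆ 𝒞 ∧ (L ≠ [] ∨ D.Nonempty) ∧ L.Pairwise SkipOn.Disj ∧ (∀ T ∈ L, T.C ∉ D) ∧
      (L.map fun T => T.S.w).sum - (∑ C ∈ D, wSum red M C) = 0

/-- The independence number `α(G)`: the maximum size of a set of pairwise non-adjacent
vertices. -/
noncomputable def indepNum {V : Type*} (G : SimpleGraph V) : ℕ :=
  sSup {n | ∃ s : Finset V, s.card = n ∧ (s : Set V).Pairwise fun u v => ¬ G.Adj u v}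

/-- `RamseyProp N s t`: every graph on `N` vertices contains a clique of size `s` or an
independent set of size `t`. -/
def RamseyProp (N s t : ℕ) : Prop :=
  ∀ H : SimpleGraph (Fin N),
    (∃ A : Finset (Fin N), A.card = s ∧ (A : Set (Fin N)).Pairwise H.Adj) ∨
    (∃ B : Finset (Fin N), B.card = t ∧ (B : Set (Fin N)).Pairwise fun u v => ¬ H.Adj u v)

/-- The Ramsey number `R(s,t)`: the smallest `N` such that every graph on `N` vertices
contains a clique of size `s` or an independent set of size `t`. -/
noncomputable def ramsey (s t : ℕ) : ℕ := sInf {N | RamseyProp N s t}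

/-! Let `σ = ±1` be the sign of `w(C)`. Walking along `C` and cutting greedily, one finds about
`|w(C)| / 2` consecutive segments that start and end with non-matching edges and have weight `2` if
`σ = 1` and `-1` if `σ = -1`. Among `4 ^ α` of them, Ramsey's theorem yields two whose initial
vertices are adjacent and whose final vertices are adjacent. Bypassing these two segments along the
two chords is a skip, of weight `-2`, `-3` or `-4` if `σ = 1` and `2`, `3` or `4` if `σ = -1`,
because each chord has weight `0` or `1`. By the pigeonhole principle `C` carries many disjoint
skips of one weight `-σ * a`.

If some other cycle is heavy with the opposite sign, it carries skips of a weight `σ * b`, and `b`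
skips on `C` cancel `a` skips on the other cycle. Otherwise all cycles of sign opposite to `C` are
light, so there are many of them; by the Erdős–Ginzburg–Ziv theorem some `a` of them have total
weight `-σ * a * m`, which `m` skips on `C` cancel.
-/

section Ramsey

variable {ι V : Type*}

theorem exists_isNClique_insert {H : SimpleGraph ι} [DecidableRel H.Adj]
    {n : ℕ} {A B : Finset ι} {v : ι} (hv : v ∈ A) (hB : B ⊆ {u ∈ A | H.Adj v u})
    (hclique : H.IsNClique n B) : ∃ B ⊆ A, H.IsNClique (n + 1) B := by
  classical
  exact ⟨insert v B, insert_subset hv (hB.trans (filter_subset _ _)),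
    hclique.insert fun _ hu => (mem_filter.1 (hB hu)).2⟩

open Classical in
theorem exists_isNClique_or_isNClique_compl (H : SimpleGraph ι) (s t : ℕ) (A : Finset ι)
    (hA : 2 ^ (s + t) ≤ #A) :
    (∃ B ⊆ A, H.IsNClique (s + 1) B) ∨ ∃ B ⊆ A, Hᶜ.IsNClique (t + 1) B := by
  obtain ⟨v, hv⟩ : A.Nonempty := card_pos.1 (lt_of_lt_of_le (by positivity) hA)
  match s, t with
  | 0, _ => exact .inl ⟨{v}, singleton_subset_iff.2 hv, by simp⟩
  | _, 0 => exact .inr ⟨{v}, singleton_subset_iff.2 hv, by simp⟩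
  | s + 1, t + 1 =>
    have hsplit : #{u ∈ A | H.Adj v u} + #{u ∈ A | Hᶜ.Adj v u} + 1 = #A := by
      have hcompl : {u ∈ A.erase v | ¬ H.Adj v u} = {u ∈ A | Hᶜ.Adj v u} := by
        ext u
        simp only [mem_filter, mem_erase, SimpleGraph.compl_adj, ne_comm (a := v)]
        tauto
      have hadj : {u ∈ A.erase v | H.Adj v u} = {u ∈ A | H.Adj v u} := by
        ext u
        simp only [mem_filter, mem_erase]
        exact ⟨fun h => ⟨h.1.2, h.2⟩, fun h => ⟨⟨h.2.ne', h.1⟩, h.2⟩⟩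
      rw [← hcompl, ← hadj, card_filter_add_card_filter_not, card_erase_add_one hv]
    have hpow : 2 ^ (s + 1 + (t + 1)) = 2 * 2 ^ (s + (t + 1)) := by ring
    have hpow' : 2 ^ (s + (t + 1)) = 2 ^ (s + 1 + t) := by ring
    by_cases hlarge : 2 ^ (s + (t + 1)) ≤ #{u ∈ A | H.Adj v u}
    · rcases exists_isNClique_or_isNClique_compl H s (t + 1) _ hlarge with
        ⟨B, hB, hclique⟩ | ⟨B, hB, hclique⟩
      · exact .inl (exists_isNClique_insert hv hB hclique)
      · exact .inr ⟨B, hB.trans (filter_subset _ _), hclique⟩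
    · rcases exists_isNClique_or_isNClique_compl H (s + 1) t {u ∈ A | Hᶜ.Adj v u} (by omega) with
        ⟨B, hB, hclique⟩ | ⟨B, hB, hclique⟩
      · exact .inl ⟨B, hB.trans (filter_subset _ _), hclique⟩
      · exact .inr (exists_isNClique_insert hv hB hclique)
termination_by s + t

theorem indepNum_eq (G : SimpleGraph V) : indepNum G = G.indepNum := by
  unfold indepNum SimpleGraph.indepNum
  congr 1
  ext n
  exact exists_congr fun s => by rw [SimpleGraph.isNIndepSet_iff, and_comm]

theorem IsPM.finite [DecidableEq V] {G : SimpleGraph V} {M : Finset (Sym2 V)}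
    (hM : IsPM G M) : Finite V := by
  refine Set.finite_univ_iff.1 ((M.biUnion Sym2.toFinset).finite_toSet.subset fun v _ => ?_)
  obtain ⟨e, ⟨heM, hve⟩, -⟩ := hM.2 v
  exact mem_coe.2 (mem_biUnion.2 ⟨e, heM, Sym2.mem_toFinset.2 hve⟩)

theorem exists_adj_of_indepNum_lt_card [Finite V] {G : SimpleGraph V} {f : ι → V}
    {B : Finset ι} (hf : Set.InjOn f B) (hB : indepNum G < #B) :
    ∃ a ∈ B, ∃ b ∈ B, G.Adj (f a) (f b) := by
  classical
  by_contra! hindep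
  have : G.IsIndepSet (B.image f : Finset V) := by
    rintro _ hu _ hv -
    obtain ⟨a, ha, rfl⟩ := mem_image.1 (mem_coe.1 hu)
    obtain ⟨b, hb, rfl⟩ := mem_image.1 (mem_coe.1 hv)
    exact hindep a ha b hb
  refine hB.not_ge ?_
  rw [indepNum_eq, ← card_image_of_injOn hf]
  exact this.card_le_indepNum

-- Colour a pair of indices by whether `f` maps it to an edge: a clique of size `α + 1` contains
-- a pair adjacent under `g` as well, and an independent set of that size contradicts `α`.
theorem exists_adj_adj_of_four_pow_indepNum_le_card [Finite V] {G : SimpleGraph V} {f g : ι → V}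
    {A : Finset ι} (hf : Set.InjOn f A) (hg : Set.InjOn g A) (hA : 4 ^ indepNum G ≤ #A) :
    ∃ a ∈ A, ∃ b ∈ A, G.Adj (f a) (f b) ∧ G.Adj (g a) (g b) := by
  have hpow : 2 ^ (indepNum G + indepNum G) = 4 ^ indepNum G := by rw [← two_mul, pow_mul]; rfl
  rcases exists_isNClique_or_isNClique_compl (G.comap f) _ _ A (hpow.trans_le hA) with
    ⟨B, hBA, hB⟩ | ⟨B, hBA, hB⟩
  · obtain ⟨a, ha, b, hb, hab⟩ := exists_adj_of_indepNum_lt_card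
      (hg.mono (coe_subset.2 hBA)) (Nat.lt_of_succ_le hB.card_eq.ge)
    exact ⟨a, hBA ha, b, hBA hb, hB.isClique ha hb (ne_of_apply_ne g hab.ne), hab⟩
  · obtain ⟨a, ha, b, hb, hab⟩ := exists_adj_of_indepNum_lt_card
      (hf.mono (coe_subset.2 hBA)) (Nat.lt_of_succ_le hB.card_eq.ge)
    exact absurd hab (hB.isClique ha hb (ne_of_apply_ne f hab.ne)).2

end Ramsey

section Segments

theorem exists_eq_of_succ_le_add_one {f : ℕ → ℤ} {a b : ℕ} {y : ℤ}
    (hf : ∀ n, f (n + 1) ≤ f n + 1) (hab : a ≤ b) (ha : f a ≤ y) (hb : y ≤ f b) :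
    ∃ n, a ≤ n ∧ n ≤ b ∧ f n = y := by
  induction b, hab using Nat.le_induction with
  | base => exact ⟨a, le_rfl, le_rfl, le_antisymm ha hb⟩
  | succ b hab ih =>
    rcases hb.eq_or_lt with hb | hb
    · exact ⟨b + 1, by omega, le_rfl, hb.symm⟩
    · obtain ⟨n, han, hnb, hn⟩ := ih (by linarith [hf b])
      exact ⟨n, han, by omega, hn⟩

theorem exists_chain_of_step {F : ℕ → ℤ} {Q : ℕ → ℕ → Prop} {s : ℤ} {k N : ℕ} (hs : 0 ≤ s)
    (hstep : ∀ c ≤ k, s ≤ F k - F c → ∃ d, c ≤ d ∧ d ≤ k ∧ F d - F c ≤ s ∧ Q c d)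
    (hN : N * s ≤ F k - F 0) :
    ∃ u : ℕ → ℕ, Monotone u ∧ (∀ n, u n ≤ k) ∧ ∀ n < N, Q (u n) (u (n + 1)) := by
  have hnext : ∀ c, ∃ d, c ≤ d ∧ (c ≤ k → d ≤ k) ∧
      (c ≤ k → s ≤ F k - F c → F d - F c ≤ s ∧ Q c d) := by
    intro c
    by_cases hc : c ≤ k ∧ s ≤ F k - F c
    · obtain ⟨d, hcd, hdk, hd⟩ := hstep c hc.1 hc.2
      exact ⟨d, hcd, fun _ => hdk, fun _ _ => hd⟩
    · exact ⟨c, le_rfl, id, fun hck hsc => absurd ⟨hck, hsc⟩ hc⟩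
  choose next hle hlek hgain using hnext
  let u : ℕ → ℕ := fun n => next^[n] 0
  have u_succ : ∀ n, u (n + 1) = next (u n) := fun n => Function.iterate_succ_apply' next n 0
  have hu : ∀ n, u n ≤ k := by
    intro n
    induction n with
    | zero => exact Nat.zero_le k
    | succ n ih => exact u_succ n ▸ hlek _ ih
  have hroom : ∀ n < N, F (u n) - F 0 ≤ n * s → s ≤ F k - F (u n) := by
    intro n hn hF
    have : ((n : ℤ) + 1) * s ≤ N * s := mul_le_mul_of_nonneg_right (by exact_mod_cast hn) hs
    linarith
  have hF : ∀ n ≤ N, F (u n) - F 0 ≤ n * s := by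
    intro n hn
    induction n with
    | zero => simp [u]
    | succ n ih =>
      have hn' := ih (by omega)
      have := (hgain _ (hu n) (hroom n hn hn')).1
      rw [u_succ]
      push_cast
      linarith
  refine ⟨u, monotone_nat_of_le_succ fun n => u_succ n ▸ hle _, hu, fun n hn => ?_⟩
  exact u_succ n ▸ (hgain _ (hu n) (hroom n hn (hF n hn.le))).2

-- The sums `f n` move by at most one in the direction `σ`, so they attain every intermediate
-- value; `3 * σ + 1` is twice `2` or twice `-1`.
theorem exists_two_mul_sum_eq {p q f : ℕ → ℤ} (hp : ∀ n, 0 ≤ p n ∧ p n ≤ 1)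
    (hq : ∀ n, -1 ≤ q n ∧ q n ≤ 0) (hzero : f 0 = p 0)
    (hsucc : ∀ n, f (n + 1) = f n + q n + p (n + 1)) (σ : ℤˣ) {l : ℕ}
    (hl : 2 ≤ σ * (f l + q l)) :
    ∃ n, 0 < n ∧ n ≤ l ∧ σ * (f n + q n) ≤ 2 ∧ 2 * f n = 3 * σ + 1 := by
  have hp₀ := hp 0
  have hql := hq l
  rcases Int.units_eq_one_or σ with rfl | rfl
  · simp only [Units.val_one, one_mul] at hl ⊢
    obtain ⟨n, -, hnl, hn⟩ := exists_eq_of_succ_le_add_one (f := f) (y := 2)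
      (fun n => by linarith [hsucc n, hq n, hp (n + 1)]) (Nat.zero_le l) (by omega) (by omega)
    have hqn := hq n
    refine ⟨n, Nat.pos_of_ne_zero ?_, hnl, by omega, by omega⟩
    rintro rfl
    omega
  · simp only [Units.val_neg, Units.val_one, neg_mul, one_mul] at hl ⊢
    obtain ⟨n, -, hnl, hn⟩ := exists_eq_of_succ_le_add_one (f := fun n => -f n) (y := 1)
      (fun n => by linarith [hsucc n, hq n, hp (n + 1)]) (Nat.zero_le l) (by omega) (by omega)
    have hqn := hq n
    refine ⟨n, Nat.pos_of_ne_zero ?_, hnl, by omega, by omega⟩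
    rintro rfl
    omega

theorem exists_segment {g : ℕ → ℤ} (heven : ∀ j, 0 ≤ g (2 * j) ∧ g (2 * j) ≤ 1)
    (hodd : ∀ j, -1 ≤ g (2 * j + 1) ∧ g (2 * j + 1) ≤ 0) (σ : ℤˣ) {c k : ℕ} (hck : c ≤ k)
    (hk : 2 ≤ σ * ∑ i ∈ Ico (2 * c) (2 * k), g i) :
    ∃ d, c + 1 < d ∧ d ≤ k ∧ σ * ∑ i ∈ Ico (2 * c) (2 * d), g i ≤ 2 ∧
      2 * ∑ i ∈ Ico (2 * c) (2 * d - 1), g i = 3 * σ + 1 := by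
  obtain ⟨l, rfl⟩ := Nat.exists_eq_add_of_lt <| hck.lt_of_ne fun h => by simp [h] at hk
  let f : ℕ → ℤ := fun n => ∑ i ∈ Ico (2 * c) (2 * (c + n) + 1), g i
  have hfull : ∀ n, ∑ i ∈ Ico (2 * c) (2 * (c + n + 1)), g i = f n + g (2 * (c + n) + 1) :=
    fun n => sum_Ico_succ_top (b := 2 * (c + n) + 1) (by omega) g
  have hsucc : ∀ n, f (n + 1) = f n + g (2 * (c + n) + 1) + g (2 * (c + (n + 1))) := fun n => by
    rw [← hfull]
    exact sum_Ico_succ_top (by omega) _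
  rw [hfull] at hk
  obtain ⟨n, hn, hnl, hfull_le, hfn⟩ := exists_two_mul_sum_eq (fun n => heven (c + n))
    (fun n => hodd (c + n)) (by simp [f]) hsucc σ hk
  exact ⟨c + n + 1, by omega, by omega, (hfull n).symm ▸ hfull_le, hfn⟩

theorem exists_segments {g : ℕ → ℤ} (heven : ∀ j, 0 ≤ g (2 * j) ∧ g (2 * j) ≤ 1)
    (hodd : ∀ j, -1 ≤ g (2 * j + 1) ∧ g (2 * j + 1) ≤ 0) (σ : ℤˣ) {k N : ℕ}
    (hN : 2 * (N : ℤ) ≤ σ * ∑ i ∈ Ico 0 (2 * k), g i) :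
    ∃ u : ℕ → ℕ, Monotone u ∧ (∀ n, u n ≤ k) ∧ ∀ n < N, u n + 1 < u (n + 1) ∧
      2 * ∑ i ∈ Ico (2 * u n) (2 * u (n + 1) - 1), g i = 3 * σ + 1 := by
  have hsub : ∀ {c d : ℕ}, c ≤ d →
      (σ : ℤ) * ∑ i ∈ Ico 0 (2 * d), g i - (σ : ℤ) * ∑ i ∈ Ico 0 (2 * c), g i =
        (σ : ℤ) * ∑ i ∈ Ico (2 * c) (2 * d), g i := by
    intro c d hcd
    rw [← sum_Ico_consecutive g (Nat.zero_le _) (Nat.mul_le_mul_left 2 hcd)]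
    ring
  refine exists_chain_of_step (F := fun n => σ * ∑ i ∈ Ico 0 (2 * n), g i)
    (Q := fun c d => c + 1 < d ∧ 2 * ∑ i ∈ Ico (2 * c) (2 * d - 1), g i = 3 * σ + 1) (s := 2)
    (by norm_num) (fun c hck hc => ?_) ?_
  · obtain ⟨d, hcd, hdk, hd, hseg⟩ := exists_segment heven hodd σ hck (hsub hck ▸ hc)
    exact ⟨d, by omega, hdk, (hsub (by omega)).trans_le hd, hcd, hseg⟩
  · simpa [mul_comm] using hN

end Segments

section Traces

variable {V : Type*}

/-- The edge joining two consecutive terms of a sequence of vertices. -/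
def seqEdge (x : ℕ → V) (i : ℕ) : Sym2 V :=
  s(x i, x (i + 1))

/-- The edges traversed by a sequence of vertices between the times `a` and `b`. -/
def arc [DecidableEq V] (x : ℕ → V) (a b : ℕ) : Finset (Sym2 V) :=
  (Ico a b).image (seqEdge x)

theorem mem_arc [DecidableEq V] {x : ℕ → V} {a b : ℕ} {e : Sym2 V} :
    e ∈ arc x a b ↔ ∃ i, a ≤ i ∧ i < b ∧ seqEdge x i = e := by
  simp only [arc, mem_image, mem_Ico, and_assoc]

theorem arc_subset_arc [DecidableEq V] {x : ℕ → V} {a b c d : ℕ} (hca : c ≤ a) (hbd : b ≤ d) :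
    arc x a b ⊆ arc x c d :=
  image_subset_image (Ico_subset_Ico hca hbd)

theorem arc_union_arc [DecidableEq V] (x : ℕ → V) {a b c : ℕ} (hab : a ≤ b) (hbc : b ≤ c) :
    arc x a b ∪ arc x b c = arc x a c := by
  rw [arc, arc, ← image_union, Ico_union_Ico_eq_Ico hab hbc, arc]

theorem exists_walk_of_adj {G : SimpleGraph V} {x : ℕ → V} (hadj : ∀ i, G.Adj (x i) (x (i + 1)))
    {a b : ℕ} (hab : a ≤ b) :
    ∃ p : G.Walk (x a) (x b), p.support = (List.Ico a (b + 1)).map x ∧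
      p.edges = (List.Ico a b).map (seqEdge x) := by
  induction b, hab using Nat.le_induction with
  | base => exact ⟨.nil, by simp⟩
  | succ b hab ih =>
    obtain ⟨p, hsupport, hedges⟩ := ih
    refine ⟨p.concat (hadj b), ?_, ?_⟩
    · rw [SimpleGraph.Walk.support_concat, hsupport, List.Ico.succ_top (hab.trans b.le_succ),
        List.map_append, List.map_singleton]
    · rw [SimpleGraph.Walk.edges_concat, hedges, List.Ico.succ_top hab, List.map_append,
        List.concat_eq_append, List.map_singleton, seqEdge]

theorem toFinset_map_seqEdge_Ico [DecidableEq V] (x : ℕ → V) (a b : ℕ) :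
    ((List.Ico a b).map (seqEdge x)).toFinset = arc x a b := by
  ext e
  simp only [List.mem_toFinset, List.mem_map, List.Ico.mem, mem_arc, and_assoc]

/-- The `n`-periodic sequence of vertices `x` runs around the cycle with edge set `C` once per
period. -/
structure IsCycleTrace [DecidableEq V] (G : SimpleGraph V) (C : Finset (Sym2 V)) (n : ℕ)
    (x : ℕ → V) : Prop where
  three_le : 3 ≤ n
  vertex_eq_iff : ∀ a b, x a = x b ↔ a ≡ b [MOD n]
  adj : ∀ i, G.Adj (x i) (x (i + 1))
  eq_arc_zero : C = arc x 0 n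

section CycleWalk

variable {G : SimpleGraph V} {v : V} {p : G.Walk v v}

theorem getVert_succ_mod (hp : p.IsCycle) (i : ℕ) :
    p.getVert ((i + 1) % p.length) = p.getVert (i % p.length + 1) := by
  have hn := hp.three_le_length
  have hi := Nat.mod_lt i (by omega : 0 < p.length)
  rw [Nat.add_mod, Nat.mod_eq_of_lt (by omega : 1 < p.length)]
  rcases (by omega : i % p.length + 1 < p.length ∨ i % p.length + 1 = p.length) with h | h
  · rw [Nat.mod_eq_of_lt h]
  · rw [h, Nat.mod_self, p.getVert_zero, p.getVert_length]

theorem map_seqEdge_getVert_mod (hp : p.IsCycle) :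
    (List.range p.length).map (seqEdge fun i => p.getVert (i % p.length)) = p.edges := by
  refine List.ext_getElem (by simp) fun i hi _ => ?_
  have hi : i < p.length := by simpa using hi
  simp only [List.getElem_map, List.getElem_range, SimpleGraph.Walk.getElem_edges, seqEdge,
    getVert_succ_mod hp, Nat.mod_eq_of_lt hi]

theorem isCycleTrace_getVert_mod [DecidableEq V] (hp : p.IsCycle) :
    IsCycleTrace G p.edges.toFinset p.length fun i => p.getVert (i % p.length) where
  three_le := hp.three_le_length
  vertex_eq_iff a b := by
    have hn := hp.three_le_length
    have hle : ∀ i, i % p.length ≤ p.length - 1 := fun i =>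
      Nat.le_pred_of_lt (Nat.mod_lt i (by omega))
    exact ⟨fun h => hp.getVert_injOn' (hle a) (hle b) h, congrArg p.getVert⟩
  adj i := by
    rw [getVert_succ_mod hp]
    exact p.adj_getVert_succ (Nat.mod_lt i (by linarith [hp.three_le_length]))
  eq_arc_zero := by
    rw [← toFinset_map_seqEdge_Ico, List.Ico.zero_bot, map_seqEdge_getVert_mod hp]

end CycleWalk

namespace IsCycleTrace

variable [DecidableEq V] {G : SimpleGraph V} {C : Finset (Sym2 V)} {n : ℕ} {x : ℕ → V}
  (h : IsCycleTrace G C n x)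

include h

theorem vertex_add (i : ℕ) : x (i + n) = x i :=
  (h.vertex_eq_iff _ _).2 Nat.add_modEq_right

theorem seqEdge_periodic : Function.Periodic (seqEdge x) n := fun i => by
  rw [seqEdge, seqEdge, h.vertex_add, Nat.add_right_comm, h.vertex_add]

theorem modEq_of_seqEdge_eq {a b : ℕ} (hab : seqEdge x a = seqEdge x b) : a ≡ b [MOD n] := by
  rcases Sym2.eq_iff.1 hab with ⟨heq, -⟩ | ⟨hab', hba⟩
  · exact (h.vertex_eq_iff _ _).1 heq
  · have hab' : a ≡ b + 1 [MOD n] := (h.vertex_eq_iff _ _).1 hab'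
    have hba : a + 1 ≡ b [MOD n] := (h.vertex_eq_iff _ _).1 hba
    have htwo : b + 2 ≡ b + 0 [MOD n] := (hab'.add_right 1).symm.trans hba
    have := Nat.le_of_dvd two_pos
      ((Nat.modEq_zero_iff_dvd).1 (Nat.ModEq.add_left_cancel' b htwo))
    exact absurd h.three_le (by omega)

theorem eq_of_vertex_eq {c i j : ℕ} (hci : c ≤ i) (hi : i < c + n) (hcj : c ≤ j)
    (hj : j < c + n) (hij : x i = x j) : i = j :=
  Nat.mod_injOn_Ico c n (mem_coe.2 (mem_Ico.2 ⟨hci, hi⟩)) (mem_coe.2 (mem_Ico.2 ⟨hcj, hj⟩))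
    ((h.vertex_eq_iff i j).1 hij)

theorem seqEdge_injOn (c : ℕ) : Set.InjOn (seqEdge x) (Ico c (c + n)) := fun _ ha _ hb hab =>
  Nat.mod_injOn_Ico c n ha hb (h.modEq_of_seqEdge_eq hab)

theorem eq_arc (c : ℕ) : C = arc x c (c + n) := by
  have harc : ∀ a, arc x a (a + n) = (range n).image (seqEdge x) := fun a => by
    rw [← Nat.image_Ico_mod a n, image_image, arc]
    exact image_congr fun i _ => (h.seqEdge_periodic.map_mod_nat i).symm
  rw [harc, h.eq_arc_zero, ← harc 0, zero_add]

theorem seqEdge_mem (i : ℕ) : seqEdge x i ∈ C := by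
  rw [h.eq_arc i]
  exact mem_arc.2 ⟨i, le_rfl, Nat.lt_add_of_pos_right (by linarith [h.three_le]), rfl⟩

theorem arc_subset (a b : ℕ) : arc x a b ⊆ C := by
  rintro _ he
  obtain ⟨i, -, -, rfl⟩ := mem_arc.1 he
  exact h.seqEdge_mem i

theorem wSum_arc (red : Sym2 V → Bool) (M : Finset (Sym2 V)) {a b : ℕ} (hb : b ≤ a + n) :
    wSum red M (arc x a b) = ∑ i ∈ Ico a b, wt red M (seqEdge x i) :=
  sum_image ((h.seqEdge_injOn a).mono (coe_subset.2 (Ico_subset_Ico_right hb)))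

theorem disjoint_arc {a b c d : ℕ} (hbc : b ≤ c) (hda : d ≤ a + n) :
    Disjoint (arc x a b) (arc x c d) := by
  refine disjoint_left.2 fun e he he' => ?_
  obtain ⟨i, hai, hib, rfl⟩ := mem_arc.1 he
  obtain ⟨j, hcj, hjd, hij⟩ := mem_arc.1 he'
  have := h.seqEdge_injOn a (mem_coe.2 (mem_Ico.2 ⟨by omega, by omega⟩))
    (mem_coe.2 (mem_Ico.2 ⟨hai, by omega⟩)) hij
  omega

theorem shift (c : ℕ) : IsCycleTrace G C n fun i => x (i + c) where
  three_le := h.three_le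
  vertex_eq_iff a b := (h.vertex_eq_iff _ _).trans (Nat.ModEq.add_iff_right rfl)
  adj i := by
    rw [Nat.add_right_comm]
    exact h.adj _
  eq_arc_zero := by
    have himage : Ico c (c + n) = (Ico 0 n).image (· + c) := by
      rw [image_add_right_Ico, zero_add, add_comm]
    rw [h.eq_arc c, arc, himage, image_image]
    refine image_congr fun i _ => ?_
    simp only [seqEdge, Function.comp_apply, Nat.add_right_comm]

theorem chord_notMem {a b : ℕ} (hab : a + 2 ≤ b) (hba : b + 2 ≤ a + n) : s(x a, x b) ∉ C := by
  rw [h.eq_arc a]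
  intro hmem
  obtain ⟨i, hai, hia, hi⟩ := mem_arc.1 hmem
  rcases Sym2.eq_iff.1 hi with ⟨hxa, hxb⟩ | ⟨hxb, hxa⟩
  · obtain rfl := h.eq_of_vertex_eq hai hia le_rfl (by omega) hxa
    have := h.eq_of_vertex_eq (c := i) (by omega) (by omega) (by omega) (by omega) hxb
    omega
  · obtain rfl := h.eq_of_vertex_eq hai hia (by omega) (by omega) hxb
    have := h.eq_of_vertex_eq (c := a) (by omega) (by omega) le_rfl (by omega) hxa
    omega

end IsCycleTrace

/-- A trace of an `M`-alternating cycle with `k` matching edges, starting with a non-matching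
edge. -/
structure IsAltTrace [DecidableEq V] (G : SimpleGraph V) (M C : Finset (Sym2 V)) (k : ℕ)
    (x : ℕ → V) : Prop extends IsCycleTrace G C (2 * k) x where
  seqEdge_mem_iff : ∀ i, seqEdge x i ∈ M ↔ Odd i

section Existence

variable [DecidableEq V] {G : SimpleGraph V} {M C : Finset (Sym2 V)} {n : ℕ} {x : ℕ → V}

theorem IsCycleTrace.alternates (h : IsCycleTrace G C n x)
    (halt : altList M ((List.range (n + 1)).map (seqEdge x))) (i : ℕ) :
    ¬(seqEdge x i ∈ M ↔ seqEdge x (i + 1) ∈ M) := by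
  have hchain := (List.isChain_range_succ _ n).1 ((List.isChain_map _).1 halt)
  have hlt := hchain (i % n) (Nat.mod_lt i (by linarith [h.three_le]))
  rwa [Nat.succ_eq_add_one, ← h.seqEdge_periodic.map_mod_nat (i % n + 1), Nat.mod_add_mod,
    h.seqEdge_periodic.map_mod_nat, h.seqEdge_periodic.map_mod_nat] at hlt

theorem IsCycleTrace.exists_isAltTrace (h : IsCycleTrace G C n x)
    (halt : ∀ i, ¬(seqEdge x i ∈ M ↔ seqEdge x (i + 1) ∈ M)) :
    ∃ k y, IsAltTrace G M C k y := by
  have hparity : ∀ i, seqEdge x i ∈ M ↔ (seqEdge x 0 ∈ M ↔ Even i) := fun i => by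
    induction i with
    | zero => simp
    | succ i ih =>
      rw [Nat.even_add_one]
      have := halt i
      tauto
  have heven : Even n := by
    have := hparity n
    rw [← zero_add n, h.seqEdge_periodic 0, zero_add] at this
    tauto
  obtain ⟨k, rfl⟩ := heven.two_dvd
  by_cases hzero : seqEdge x 0 ∈ M
  · refine ⟨k, fun i => x (i + 1), h.shift 1, fun i => (hparity (i + 1)).trans ?_⟩
    simp only [hzero, true_iff, Nat.even_add_one, Nat.not_even_iff_odd]
  · refine ⟨k, x, h, fun i => (hparity i).trans ?_⟩
    simp only [hzero, false_iff, Nat.not_even_iff_odd]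

theorem IsAltCycle.exists_isAltTrace (hC : IsAltCycle G M C) : ∃ k x, IsAltTrace G M C k x := by
  obtain ⟨v, p, hp, rfl, halt⟩ := hC
  have htrace := isCycleTrace_getVert_mod hp
  have hlength : min 1 p.length = 1 := min_eq_left (by linarith [hp.three_le_length])
  have hclosed := htrace.seqEdge_periodic 0
  rw [zero_add] at hclosed
  refine htrace.exists_isAltTrace (htrace.alternates ?_)
  rwa [← map_seqEdge_getVert_mod hp, ← List.map_take, List.take_range, hlength, List.range_one,
    List.map_singleton, ← hclosed, ← List.map_singleton, ← List.map_append,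
    ← List.range_succ] at halt

end Existence

namespace IsAltTrace

variable [DecidableEq V] {G : SimpleGraph V} {M C : Finset (Sym2 V)} {k : ℕ} {x : ℕ → V}
  (h : IsAltTrace G M C k x)

include h

theorem altList_map_seqEdge (a b : ℕ) : altList M ((List.Ico a b).map (seqEdge x)) := by
  refine (List.isChain_map _).2 ((List.Ico.isChain_succ a b).imp ?_)
  rintro i _ rfl
  rw [h.seqEdge_mem_iff, h.seqEdge_mem_iff, Nat.succ_eq_add_one, Nat.odd_add_one]
  tauto

theorem exists_isPath {a b : ℕ} (hab : a ≤ b) (hba : b < a + 2 * k) :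
    ∃ p : G.Walk (x a) (x b), p.IsPath ∧ p.support = (List.Ico a (b + 1)).map x ∧
      p.edges = (List.Ico a b).map (seqEdge x) := by
  obtain ⟨p, hsupport, hedges⟩ := exists_walk_of_adj h.adj hab
  refine ⟨p, ?_, hsupport, hedges⟩
  rw [SimpleGraph.Walk.isPath_def, hsupport]
  refine (List.Ico.nodup a (b + 1)).map_on fun i hi j hj hij => ?_
  rw [List.Ico.mem] at hi hj
  exact h.eq_of_vertex_eq hi.1 (by omega) hj.1 (by omega) hij

theorem isAltPath_arc {a b : ℕ} (hab : a ≤ b) (hba : b < a + 2 * k) :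
    IsAltPath G M (arc x a b) := by
  obtain ⟨p, hp, -, hedges⟩ := h.exists_isPath hab hba
  exact ⟨_, _, p, hp, by rw [hedges, toFinset_map_seqEdge_Ico],
    hedges ▸ h.altList_map_seqEdge a b⟩

theorem mem_of_vertex_mem (hM : IsPM G M) {e : Sym2 V} (he : e ∈ M) {i : ℕ} (hi : x i ∈ e) :
    e ∈ C := by
  suffices ∃ j, Odd j ∧ x i ∈ seqEdge x j by
    obtain ⟨j, hj, hij⟩ := this
    rw [(hM.2 (x i)).unique ⟨he, hi⟩ ⟨(h.seqEdge_mem_iff j).2 hj, hij⟩]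
    exact h.seqEdge_mem j
  rcases Nat.even_or_odd i with heven | hodd
  · have hk := h.three_le
    refine ⟨i + 2 * k - 1, by grind, ?_⟩
    rw [seqEdge, Nat.sub_add_cancel (by omega), h.vertex_add]
    exact Sym2.mem_mk_right _ _
  · exact ⟨i, hodd, Sym2.mem_mk_left _ _⟩

theorem chord_notMem_matching (hM : IsPM G M) {a b : ℕ} (hab : a + 2 ≤ b)
    (hba : b + 2 ≤ a + 2 * k) : s(x a, x b) ∉ M := fun hmem =>
  h.chord_notMem hab hba (h.mem_of_vertex_mem hM hmem (Sym2.mem_mk_left _ _))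

end IsAltTrace

end Traces

section AlternatingLists

variable {V : Type*} [DecidableEq V] {M : Finset (Sym2 V)}

theorem altList.reverse {l : List (Sym2 V)} (hl : altList M l) : altList M l.reverse :=
  List.isChain_reverse.2 (List.IsChain.imp (fun _ _ => mt Iff.symm) hl)

theorem altList.congr {l l' : List (Sym2 V)} (hl : altList M l)
    (hmap : l.map (· ∈ M) = l'.map (· ∈ M)) : altList M l' := by
  have hiff : ∀ l : List (Sym2 V), altList M l ↔ (l.map (· ∈ M)).IsChain fun p q => ¬(p ↔ q) :=
    fun l => (List.isChain_map (R := fun p q : Prop => ¬(p ↔ q)) _).symm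
  rwa [hiff, ← hmap, ← hiff]

-- The first and the last edge of an arc may be exchanged for other non-matching edges.
theorem IsAltTrace.altList_cons_concat {G : SimpleGraph V} {C : Finset (Sym2 V)} {k : ℕ}
    {x : ℕ → V} (h : IsAltTrace G M C k x) {c d : ℕ} (hcd : c < d) {e f : Sym2 V} (he : e ∉ M)
    (hf : f ∉ M) :
    altList M (e :: ((List.Ico (2 * c + 1) (2 * d)).map (seqEdge x) ++ [f])) := by
  refine (h.altList_map_seqEdge (2 * c) (2 * d + 1)).congr ?_
  have hfirst : seqEdge x (2 * c) ∉ M := by simp [h.seqEdge_mem_iff]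
  have hlast : seqEdge x (2 * d) ∉ M := by simp [h.seqEdge_mem_iff]
  rw [List.Ico.eq_cons (by omega), List.Ico.succ_top (by omega)]
  simp only [List.map_cons, List.map_append, List.map_nil, he, hf, hfirst, hlast]

theorem isAltCycle_of_paths {G : SimpleGraph V} {u v u' v' : V} {p : G.Walk u v}
    {q : G.Walk v' u'} (hp : p.IsPath) (hq : q.IsPath) (hpq : p.support.Disjoint q.support)
    (hv : G.Adj v v') (hu : G.Adj u' u) (huv : u ≠ v)
    (haltp : altList M (s(u', u) :: (p.edges ++ [s(v, v')])))
    (haltq : altList M (s(v, v') :: (q.edges ++ [s(u', u)]))) :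
    IsAltCycle G M (p.edges.toFinset ∪ q.edges.toFinset ∪ {s(v, v'), s(u', u)}) := by
  refine ⟨u', .cons hu (p.append (.cons hv q)), ?_, ?_, ?_⟩
  · refine (SimpleGraph.Walk.cons_isCycle_iff _ hu).2 ⟨?_, ?_⟩
    · rw [SimpleGraph.Walk.isPath_def, SimpleGraph.Walk.support_append,
        SimpleGraph.Walk.support_cons, List.tail_cons]
      exact hp.support_nodup.append hq.support_nodup hpq
    · rw [SimpleGraph.Walk.edges_append, SimpleGraph.Walk.edges_cons, List.mem_append,
        List.mem_cons]
      rintro (hmem | heq | hmem)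
      · exact hpq (p.fst_mem_support_of_mem_edges hmem) q.end_mem_support
      · rcases Sym2.eq_iff.1 heq with ⟨rfl, -⟩ | ⟨-, rfl⟩
        · exact hpq p.end_mem_support q.end_mem_support
        · exact huv rfl
      · exact hpq p.start_mem_support (q.snd_mem_support_of_mem_edges hmem)
  · ext e
    simp only [SimpleGraph.Walk.edges_cons, SimpleGraph.Walk.edges_append, List.mem_toFinset,
      List.mem_cons, List.mem_append, mem_union, mem_insert, mem_singleton]
    tauto
  · have halt : altList M (s(u', u) :: p.edges ++ [s(v, v')] ++ (q.edges ++ [s(u', u)])) :=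
      List.IsChain.append_overlap haltp haltq (List.cons_ne_nil _ _)
    simpa only [SimpleGraph.Walk.edges_cons, SimpleGraph.Walk.edges_append, List.take_succ_cons,
      List.take_zero, List.cons_append, List.append_assoc, List.nil_append] using halt

end AlternatingLists

section Skips

variable {V : Type*} [DecidableEq V] {G : SimpleGraph V} {red : Sym2 V → Bool}
  {M C : Finset (Sym2 V)} {k : ℕ} {x : ℕ → V}

theorem wt_of_notMem {e : Sym2 V} (he : e ∉ M) : 0 ≤ wt red M e ∧ wt red M e ≤ 1 := by
  unfold wt
  split_ifs <;> simp

theorem wt_of_mem {e : Sym2 V} (he : e ∈ M) : -1 ≤ wt red M e ∧ wt red M e ≤ 0 := by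
  unfold wt
  split_ifs <;> simp

theorem wSum_union {E F : Finset (Sym2 V)} (hEF : Disjoint E F) :
    wSum red M (E ∪ F) = wSum red M E + wSum red M F :=
  sum_union hEF

theorem IsCycleTrace.card_arc {n : ℕ} (h : IsCycleTrace G C n x) {a b : ℕ} (hb : b ≤ a + n) :
    #(arc x a b) = b - a := by
  rw [arc, card_image_of_injOn ((h.seqEdge_injOn a).mono (coe_subset.2 (Ico_subset_Ico_right hb))),
    Nat.card_Ico]

/-- Two stretches of a trace, each starting and ending with a non-matching edge, whose initial
vertices are adjacent and whose final vertices are adjacent. The two connecting edges are the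
chords of a skip. -/
structure SkipFrame (G : SimpleGraph V) (k : ℕ) (x : ℕ → V) where
  a₁ : ℕ
  b₁ : ℕ
  a₂ : ℕ
  b₂ : ℕ
  bounds : a₁ < b₁ ∧ b₁ < a₂ ∧ a₂ < b₂ ∧ b₂ < a₁ + k
  adj_start : G.Adj (x (2 * a₁)) (x (2 * a₂))
  adj_end : G.Adj (x (2 * b₁ + 1)) (x (2 * b₂ + 1))

theorem IsAltTrace.even_vertex_ne_odd_vertex (h : IsAltTrace G M C k x) (a b : ℕ) :
    x (2 * a) ≠ x (2 * b + 1) := fun hab => by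
  have : 2 * a ≡ 2 * b + 1 [MOD 2] := ((h.vertex_eq_iff _ _).1 hab).of_mul_right k
  unfold Nat.ModEq at this
  omega

namespace SkipFrame

/-- The chord between the initial vertices of the two stretches. -/
def startChord (F : SkipFrame G k x) : Sym2 V :=
  s(x (2 * F.a₁), x (2 * F.a₂))

/-- The chord between the final vertices of the two stretches. -/
def endChord (F : SkipFrame G k x) : Sym2 V :=
  s(x (2 * F.b₁ + 1), x (2 * F.b₂ + 1))

/-- The edges of the two stretches, which the skip removes from the cycle. -/
def removed (F : SkipFrame G k x) : Finset (Sym2 V) :=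
  arc x (2 * F.a₁) (2 * F.b₁ + 1) ∪ arc x (2 * F.a₂) (2 * F.b₂ + 1)

/-- The edges of the cycle outside the two stretches, which the skip keeps. -/
def kept (F : SkipFrame G k x) : Finset (Sym2 V) :=
  arc x (2 * F.b₁ + 1) (2 * F.a₂) ∪ arc x (2 * F.b₂ + 1) (2 * F.a₁ + 2 * k)

/-- The cycle produced by the skip. -/
def newCycle (F : SkipFrame G k x) : Finset (Sym2 V) :=
  F.kept ∪ {F.startChord, F.endChord}

theorem removed_subset_arc (F : SkipFrame G k x) :
    F.removed ⊆ arc x (2 * F.a₁) (2 * F.b₂ + 1) := by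
  obtain ⟨_, _, _, _⟩ := F.bounds
  exact union_subset (arc_subset_arc le_rfl (by omega)) (arc_subset_arc (by omega) le_rfl)

variable (F : SkipFrame G k x) (h : IsAltTrace G M C k x)

include h

theorem startChord_notMem : F.startChord ∉ C := by
  obtain ⟨_, _, _, _⟩ := F.bounds
  exact h.chord_notMem (by omega) (by omega)

theorem endChord_notMem : F.endChord ∉ C := by
  obtain ⟨_, _, _, _⟩ := F.bounds
  exact h.chord_notMem (by omega) (by omega)

theorem startChord_notMem_matching (hM : IsPM G M) : F.startChord ∉ M := by
  obtain ⟨_, _, _, _⟩ := F.bounds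
  exact h.chord_notMem_matching hM (by omega) (by omega)

theorem endChord_notMem_matching (hM : IsPM G M) : F.endChord ∉ M := by
  obtain ⟨_, _, _, _⟩ := F.bounds
  exact h.chord_notMem_matching hM (by omega) (by omega)

theorem startChord_ne_endChord : F.startChord ≠ F.endChord := by
  intro heq
  rcases Sym2.eq_iff.1 heq with ⟨hab, -⟩ | ⟨hab, -⟩ <;> exact h.even_vertex_ne_odd_vertex _ _ hab

theorem disjoint_removed_kept : Disjoint F.removed F.kept := by
  obtain ⟨_, _, _, _⟩ := F.bounds
  rw [removed, kept, disjoint_union_left, disjoint_union_right, disjoint_union_right]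
  exact ⟨⟨h.disjoint_arc le_rfl (by omega), h.disjoint_arc (by omega) le_rfl⟩,
    (h.disjoint_arc le_rfl (by omega)).symm, h.disjoint_arc le_rfl (by omega)⟩

theorem removed_union_kept : F.removed ∪ F.kept = C := by
  obtain ⟨_, _, _, _⟩ := F.bounds
  rw [removed, kept, union_union_union_comm,
    arc_union_arc x (b := 2 * F.b₁ + 1) (by omega) (by omega),
    arc_union_arc x (b := 2 * F.b₂ + 1) (by omega) (by omega),
    arc_union_arc x (by omega) (by omega), ← h.eq_arc]

theorem kept_subset : F.kept ⊆ C :=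
  F.removed_union_kept h ▸ subset_union_right

theorem disjoint_kept_chords : Disjoint F.kept {F.startChord, F.endChord} := by
  rw [disjoint_insert_right, disjoint_singleton_right]
  exact ⟨fun hmem => F.startChord_notMem h (F.kept_subset h hmem),
    fun hmem => F.endChord_notMem h (F.kept_subset h hmem)⟩

theorem sdiff_newCycle_subset : C \ F.newCycle ⊆ F.removed := by
  refine sdiff_le_iff.2 (?_ : C ⊆ F.newCycle ∪ F.removed)
  rw [newCycle, union_right_comm, union_comm F.kept, F.removed_union_kept h]
  exact subset_union_left

theorem newCycle_sdiff_subset : F.newCycle \ {F.startChord, F.endChord} ⊆ C := by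
  rw [newCycle, union_sdiff_right]
  exact sdiff_subset.trans (F.kept_subset h)

theorem card_newCycle_lt : #F.newCycle < #C := by
  obtain ⟨_, _, _, _⟩ := F.bounds
  have hremoved : 2 < #F.removed := calc
    2 < #(arc x (2 * F.a₁) (2 * F.b₁ + 1)) := by
      rw [h.card_arc (by omega)]
      omega
    _ ≤ #F.removed := card_le_card subset_union_left
  rw [newCycle, card_union_of_disjoint (F.disjoint_kept_chords h),
    card_pair (F.startChord_ne_endChord h), ← F.removed_union_kept h,
    card_union_of_disjoint (F.disjoint_removed_kept h)]
  omega

theorem wSum_newCycle_sub : wSum red M F.newCycle - wSum red M C =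
    wt red M F.startChord + wt red M F.endChord - wSum red M F.removed := by
  have hchords : wSum red M {F.startChord, F.endChord} =
      wt red M F.startChord + wt red M F.endChord := sum_pair (F.startChord_ne_endChord h)
  have hC : wSum red M C = wSum red M F.removed + wSum red M F.kept := by
    rw [← wSum_union (F.disjoint_removed_kept h), F.removed_union_kept h]
  rw [newCycle, wSum_union (F.disjoint_kept_chords h), hchords, hC]
  ring

theorem isAltCycle_newCycle (hM : IsPM G M) : IsAltCycle G M F.newCycle := by
  obtain ⟨_, _, _, _⟩ := F.bounds
  obtain ⟨p, hp, hp_support, hp_edges⟩ :=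
    h.exists_isPath (a := 2 * F.b₁ + 1) (b := 2 * F.a₂) (by omega) (by omega)
  obtain ⟨q, hq, hq_support, hq_edges⟩ :=
    h.exists_isPath (a := 2 * F.b₂ + 1) (b := 2 * (F.a₁ + k)) (by omega) (by omega)
  have hwrap : x (2 * (F.a₁ + k)) = x (2 * F.a₁) := by rw [mul_add, h.vertex_add]
  have hdisj : p.support.Disjoint q.reverse.support := fun v hvp hvq => by
    rw [SimpleGraph.Walk.support_reverse, List.mem_reverse, hq_support, List.mem_map] at hvq
    rw [hp_support, List.mem_map] at hvp
    obtain ⟨i, hi, rfl⟩ := hvp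
    obtain ⟨j, hj, hij⟩ := hvq
    rw [List.Ico.mem] at hi hj
    have := h.eq_of_vertex_eq (c := 2 * F.b₁ + 1) (by omega) (by omega) hi.1 (by omega) hij
    omega
  have hstart : s(x (2 * F.a₂), x (2 * (F.a₁ + k))) = F.startChord := by
    rw [hwrap, Sym2.eq_swap, startChord]
  have hend : s(x (2 * F.b₂ + 1), x (2 * F.b₁ + 1)) = F.endChord := Sym2.eq_swap
  have hstartM := F.startChord_notMem_matching h hM
  have hendM := F.endChord_notMem_matching h hM
  have hcycle := isAltCycle_of_paths (M := M) hp hq.reverse hdisj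
    (hwrap ▸ F.adj_start.symm) F.adj_end.symm (h.even_vertex_ne_odd_vertex _ _).symm
  rw [hstart, hend, SimpleGraph.Walk.edges_reverse, List.toFinset_reverse, hp_edges, hq_edges,
    toFinset_map_seqEdge_Ico, toFinset_map_seqEdge_Ico] at hcycle
  rw [mul_add] at hcycle
  refine hcycle (h.altList_cons_concat F.bounds.2.1 hendM hstartM) ?_
  have := (h.altList_cons_concat F.bounds.2.2.2 hendM hstartM).reverse
  simpa [mul_add] using this

theorem exists_skip (hM : IsPM G M) {σ : ℤˣ} (hw : wSum red M F.removed = 3 * σ + 1) :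
    ∃ S : Skip G red M C, S.In (arc x (2 * F.a₁) (2 * F.b₂ + 1)) ∧ |S.w + 3 * σ| ≤ 1 := by
  have hstart := F.startChord_notMem_matching h hM
  have hend := F.endChord_notMem_matching h hM
  have hwt_start := wt_of_notMem (red := red) hstart
  have hwt_end := wt_of_notMem (red := red) hend
  have hgain := F.wSum_newCycle_sub (red := red) h
  rw [hw] at hgain
  have hgain_abs : |wSum red M F.newCycle - wSum red M C + 3 * σ| ≤ 1 :=
    abs_le.2 ⟨by linarith, by linarith⟩
  have hbound : |wSum red M F.newCycle - wSum red M C| ≤ 4 := by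
    rcases Int.units_eq_one_or σ with rfl | rfl <;>
      simp only [Units.val_neg, Units.val_one] at hgain <;>
      exact abs_le.2 ⟨by linarith, by linarith⟩
  exact ⟨{ e1 := F.startChord, e2 := F.endChord, C' := F.newCycle
           hne := F.startChord_ne_endChord h, he1G := F.adj_start, he2G := F.adj_end
           he1M := hstart, he2M := hend
           he1C := F.startChord_notMem h, he2C := F.endChord_notMem h
           halt := F.isAltCycle_newCycle h hM
           hmem1 := mem_union_right _ (mem_insert_self _ _)
           hmem2 := mem_union_right _ (mem_insert_of_mem (mem_singleton_self _))
           hsub := F.newCycle_sdiff_subset h, hsmall := F.card_newCycle_lt h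
           hwbound := hbound },
    (F.sdiff_newCycle_subset h).trans F.removed_subset_arc, hgain_abs⟩

end SkipFrame

end Skips

section ManySkips

variable {V : Type*} [DecidableEq V] {G : SimpleGraph V} {red : Sym2 V → Bool}
  {M C : Finset (Sym2 V)} {k N : ℕ} {x : ℕ → V} {σ : ℤˣ}

/-- The numbers `u 0 < u 1 < ⋯ < u N` cut out of a trace with `k` matching edges the segments
`arc x (2 * u n) (2 * u (n + 1) - 1)`. Each of them starts and ends with a non-matching edge and
has weight `2` if `σ = 1` and weight `-1` if `σ = -1`, that is `(3 * σ + 1) / 2`. -/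
structure IsSegmentation (red : Sym2 V → Bool) (M : Finset (Sym2 V)) (k : ℕ) (x : ℕ → V) (σ : ℤˣ)
    (N : ℕ) (u : ℕ → ℕ) : Prop where
  mono : Monotone u
  le : ∀ n, u n ≤ k
  gap : ∀ n < N, u n + 1 < u (n + 1)
  two_mul_wSum : ∀ n < N, 2 * wSum red M (arc x (2 * u n) (2 * u (n + 1) - 1)) = 3 * σ + 1

theorem IsAltTrace.exists_isSegmentation (h : IsAltTrace G M C k x)
    (hN : 2 * (N : ℤ) ≤ σ * wSum red M C) : ∃ u, IsSegmentation red M k x σ N u := by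
  rw [h.eq_arc_zero, h.wSum_arc red M (by omega)] at hN
  obtain ⟨u, hmono, hle, hu⟩ := exists_segments
    (fun j => wt_of_notMem (by simp [h.seqEdge_mem_iff]))
    (fun j => wt_of_mem (by simp [h.seqEdge_mem_iff])) σ hN
  refine ⟨u, hmono, hle, fun n hn => (hu n hn).1, fun n hn => ?_⟩
  rw [h.wSum_arc red M (by have := hle (n + 1); omega), (hu n hn).2]

namespace IsSegmentation

variable {u : ℕ → ℕ} (hu : IsSegmentation red M k x σ N u)

include hu

theorem lt {a b : ℕ} (hab : a < b) (hb : b ≤ N) : u a + 1 < u b :=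
  (hu.gap a (by omega)).trans_le (hu.mono hab)

theorem injOn : Set.InjOn u (Iic N) := by
  refine StrictMonoOn.injOn fun a _ b hb hab => ?_
  exact (Nat.lt_succ_self _).trans (hu.lt hab (mem_Iic.1 hb))

variable (h : IsAltTrace G M C k x) (hM : IsPM G M)

include h

theorem start_injOn : Set.InjOn (fun n => x (2 * u n)) (Iio N) := fun a ha b hb hab => by
  rw [coe_Iio, Set.mem_Iio] at ha hb
  have hlt_a := hu.lt ha le_rfl
  have hlt_b := hu.lt hb le_rfl
  have hle := hu.le N
  have heq := h.eq_of_vertex_eq (zero_le (a := 2 * u a)) (by omega) zero_le (by omega) hab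
  exact hu.injOn (mem_coe.2 (mem_Iic.2 ha.le)) (mem_coe.2 (mem_Iic.2 hb.le)) (by omega)

theorem end_injOn : Set.InjOn (fun n => x (2 * (u (n + 1) - 1) + 1)) (Iio N) :=
    fun a ha b hb hab => by
  rw [coe_Iio, Set.mem_Iio] at ha hb
  have hgap_a := hu.gap a ha
  have hgap_b := hu.gap b hb
  have hle_a := hu.le (a + 1)
  have hle_b := hu.le (b + 1)
  have heq := h.eq_of_vertex_eq (zero_le (a := 2 * (u (a + 1) - 1) + 1)) (by omega) zero_le
    (by omega) hab
  have hsucc : u (a + 1) = u (b + 1) := by omega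
  exact Nat.succ_injective (hu.injOn (mem_coe.2 (mem_Iic.2 ha)) (mem_coe.2 (mem_Iic.2 hb)) hsucc)

include hM

theorem exists_skip_of_adj {a b : ℕ} (hab : a < b) (hb : b < N)
    (hstart : G.Adj (x (2 * u a)) (x (2 * u b)))
    (hend : G.Adj (x (2 * (u (a + 1) - 1) + 1)) (x (2 * (u (b + 1) - 1) + 1))) :
    ∃ S : Skip G red M C,
      S.In (arc x (2 * u a) (2 * u (b + 1) - 1)) ∧ |S.w + 3 * σ| ≤ 1 := by
  have hgap_a := hu.gap a (by omega)
  have hgap_b := hu.gap b hb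
  have hmono : u (a + 1) ≤ u b := hu.mono hab
  have hle := hu.le (b + 1)
  have hend_eq : ∀ n, u n + 1 < u (n + 1) → 2 * (u (n + 1) - 1) + 1 = 2 * u (n + 1) - 1 :=
    fun n hn => by omega
  let F : SkipFrame G k x :=
    { a₁ := u a, b₁ := u (a + 1) - 1, a₂ := u b, b₂ := u (b + 1) - 1
      bounds := by omega, adj_start := hstart, adj_end := hend }
  have hw : wSum red M F.removed = 3 * σ + 1 := by
    have hdisj : Disjoint (arc x (2 * u a) (2 * u (a + 1) - 1))
        (arc x (2 * u b) (2 * u (b + 1) - 1)) := h.disjoint_arc (by omega) (by omega)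
    rw [SkipFrame.removed, hend_eq a hgap_a, hend_eq b hgap_b, wSum_union hdisj]
    linarith [hu.two_mul_wSum a (by omega), hu.two_mul_wSum b hb]
  rw [← hend_eq b hgap_b]
  exact F.exists_skip h hM hw

theorem exists_skip {m : ℕ} (hm : m + 4 ^ indepNum G ≤ N) :
    ∃ S : Skip G red M C,
      S.In (arc x (2 * u m) (2 * u (m + 4 ^ indepNum G) - 1)) ∧ |S.w + 3 * σ| ≤ 1 := by
  have : Finite V := hM.finite
  have hblock : (Ico m (m + 4 ^ indepNum G) : Set ℕ) ⊆ Iio N := fun n hn =>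
    mem_Iio.2 ((mem_Ico.1 hn).2.trans_le hm)
  obtain ⟨a, ha, b, hb, hstart, hend⟩ := exists_adj_adj_of_four_pow_indepNum_le_card (G := G)
    ((hu.start_injOn h).mono hblock) ((hu.end_injOn h).mono hblock) (by simp)
  wlog hab : a < b generalizing a b
  · refine this b hb a ha hstart.symm hend.symm (lt_of_le_of_ne (not_lt.1 hab) ?_)
    rintro rfl
    exact G.irrefl hstart
  rw [mem_Ico] at ha hb
  obtain ⟨S, hS, hw⟩ := hu.exists_skip_of_adj h hM hab (hb.2.trans_le hm) hstart hend
  have hmono_start := hu.mono ha.1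
  have hmono_end : u (b + 1) ≤ u (m + 4 ^ indepNum G) := hu.mono hb.2
  exact ⟨S, hS.trans (arc_subset_arc (by omega) (by omega)), hw⟩

theorem exists_pairwise_disj {q : ℕ} (hq : q * 4 ^ indepNum G ≤ N) :
    ∃ S : Fin q → Skip G red M C,
      (∀ i j, i < j → (S i).Disj (S j)) ∧ ∀ i, |(S i).w + 3 * σ| ≤ 1 := by
  have hblock : ∀ i : Fin q, i * 4 ^ indepNum G + 4 ^ indepNum G ≤ N := fun i => by
    rw [← Nat.succ_mul]
    exact (Nat.mul_le_mul_right _ i.2).trans hq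
  choose S hS_in hS_w using fun i : Fin q => hu.exists_skip h hM (hblock i)
  have hpath : ∀ i : Fin q, IsAltPath G M (arc x (2 * u (i * 4 ^ indepNum G))
      (2 * u (i * 4 ^ indepNum G + 4 ^ indepNum G) - 1)) := fun i => by
    have hle := hu.le (i * 4 ^ indepNum G + 4 ^ indepNum G)
    have hlt := hu.lt (Nat.lt_add_of_pos_right (by positivity)) (hblock i)
    exact h.isAltPath_arc (by omega) (by omega)
  refine ⟨S, fun i j hij => ⟨_, _, h.arc_subset _ _, h.arc_subset _ _, ?_, hpath i, hpath j,
    hS_in i, hS_in j⟩, hS_w⟩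
  have hmono : u (i * 4 ^ indepNum G + 4 ^ indepNum G) ≤ u (j * 4 ^ indepNum G) := by
    rw [← Nat.succ_mul]
    exact hu.mono (Nat.mul_le_mul_right _ hij)
  have hle := hu.le (j * 4 ^ indepNum G + 4 ^ indepNum G)
  exact h.disjoint_arc (by omega) (by omega)

end IsSegmentation

/-- The cycle `C` carries `q` pairwise disjoint skips, all of weight `c`. -/
def HasDisjointSkips (G : SimpleGraph V) (red : Sym2 V → Bool) (M C : Finset (Sym2 V)) (q : ℕ)
    (c : ℤ) : Prop :=
  ∃ S : Fin q → Skip G red M C, (∀ i j, i < j → (S i).Disj (S j)) ∧ ∀ i, (S i).w = c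

theorem HasDisjointSkips.mono {p q : ℕ} {c : ℤ} (h : HasDisjointSkips G red M C q c)
    (hpq : p ≤ q) : HasDisjointSkips G red M C p c := by
  obtain ⟨S, hdisj, hw⟩ := h
  exact ⟨S ∘ Fin.castLE hpq, fun i j hij => hdisj _ _ hij, fun i => hw _⟩

theorem IsAltCycle.exists_hasDisjointSkips (hM : IsPM G M) (hC : IsAltCycle G M C) {q : ℕ}
    (hq : 6 * q * 4 ^ indepNum G ≤ (σ : ℤ) * wSum red M C) :
    ∃ a : ℕ, 2 ≤ a ∧ a ≤ 4 ∧ HasDisjointSkips G red M C q (-(σ : ℤ) * a) := by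
  obtain ⟨k, x, h⟩ := hC.exists_isAltTrace
  obtain ⟨u, hu⟩ := h.exists_isSegmentation (red := red) (σ := σ)
    (N := 3 * q * 4 ^ indepNum G) (by push_cast; linarith)
  obtain ⟨S, hdisj, hw⟩ := hu.exists_pairwise_disj h hM (q := 3 * q) le_rfl
  have hsize : ∀ i ∈ (univ : Finset (Fin (3 * q))), -(σ : ℤ) * (S i).w ∈ Icc (2 : ℤ) 4 := by
    intro i _
    have := abs_le.1 (hw i)
    rw [mem_Icc]
    rcases Int.units_eq_one_or σ with rfl | rfl <;>
      simp only [Units.val_neg, Units.val_one] at this ⊢ <;> constructor <;> linarith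
  obtain ⟨a, ha, hfiber⟩ := exists_le_card_fiber_of_mul_le_card_of_maps_to hsize
    (n := q) (nonempty_Icc.2 (by norm_num)) (by simp)
  lift a to ℕ using by linarith [(mem_Icc.1 ha).1]
  rw [mem_Icc] at ha
  refine ⟨a, by omega, by omega, fun i => S (orderEmbOfCardLe _ hfiber i), fun i j hij =>
    hdisj _ _ (by simpa using hij), fun i => ?_⟩
  have hfib := (mem_filter.1 (orderEmbOfCardLe_mem _ hfiber i)).2
  linear_combination -(σ : ℤ) * hfib -
    (S (orderEmbOfCardLe _ hfiber i)).w * Int.units_coe_mul_self σ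

end ManySkips

section ZeroSkipCycleSets

variable {V : Type*} [DecidableEq V] {G : SimpleGraph V} {red : Sym2 V → Bool}
  {M C D : Finset (Sym2 V)} {𝒞 𝒟 : Finset (Finset (Sym2 V))} {m n : ℕ} {c d : ℤ}

theorem HasDisjointSkips.exists_list (h : HasDisjointSkips G red M C m c) (hC : C ∈ 𝒞) :
    ∃ L : List (SkipOn G red M 𝒞), L.length = m ∧ L.Pairwise SkipOn.Disj ∧ (∀ T ∈ L, T.C = C) ∧
      (L.map fun T => T.S.w).sum = m * c := by
  obtain ⟨S, hdisj, hw⟩ := h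
  refine ⟨List.ofFn fun i => ⟨C, hC, S i⟩, List.length_ofFn,
    List.pairwise_ofFn.2 fun i j hij => .inr ⟨rfl, hdisj i j hij⟩, ?_, ?_⟩
  · intro T hT
    obtain ⟨i, rfl⟩ := List.mem_ofFn.1 hT
    rfl
  · simp only [List.map_ofFn, List.sum_ofFn, Function.comp_apply, hw, sum_const, card_univ,
      Fintype.card_fin, nsmul_eq_mul]

theorem HasDisjointSkips.hasZeroSkipCycleSet_of_eq_sum (h : HasDisjointSkips G red M C m c)
    (hC : C ∈ 𝒞) (h𝒟 : 𝒟 ⊆ 𝒞) (hne : 𝒟.Nonempty) (hC𝒟 : C ∉ 𝒟)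
    (hsum : m * c = ∑ D ∈ 𝒟, wSum red M D) : HasZeroSkipCycleSet G red M 𝒞 := by
  obtain ⟨L, -, hdisj, hL, hw⟩ := h.exists_list hC
  exact ⟨L, 𝒟, h𝒟, .inr hne, hdisj, fun T hT => (hL T hT).symm ▸ hC𝒟, by rw [hw, hsum, sub_self]⟩

theorem HasDisjointSkips.hasZeroSkipCycleSet_of_add_eq_zero
    (hC : HasDisjointSkips G red M C m c) (hD : HasDisjointSkips G red M D n d)
    (hC𝒞 : C ∈ 𝒞) (hD𝒞 : D ∈ 𝒞) (hCD : C ≠ D) (hm : m ≠ 0) (hsum : m * c + n * d = 0) :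
    HasZeroSkipCycleSet G red M 𝒞 := by
  obtain ⟨L, hlength, hdisj, hL, hw⟩ := hC.exists_list hC𝒞
  obtain ⟨L', -, hdisj', hL', hw'⟩ := hD.exists_list hD𝒞
  have hcross : ∀ T ∈ L, ∀ T' ∈ L', T.Disj T' := fun T hT T' hT' =>
    .inl (by rwa [hL T hT, hL' T' hT'])
  refine ⟨L ++ L', ∅, empty_subset _, .inl ?_, List.pairwise_append.2 ⟨hdisj, hdisj', hcross⟩,
    fun _ _ => notMem_empty _, ?_⟩
  · exact List.append_ne_nil_of_left_ne_nil (by rintro rfl; exact hm hlength.symm) _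
  · rw [List.map_append, List.sum_append, hw, hw', hsum, sum_empty, sub_zero]

variable {σ : ℤˣ}

-- `b` skips of weight `-σ * a` on `C` cancel `a` skips of weight `σ * b` on `D`.
theorem hasZeroSkipCycleSet_of_opposite_heavy (hM : IsPM G M) (h𝒞 : IsAltCycleSet G M 𝒞)
    (hC𝒞 : C ∈ 𝒞) (hD𝒞 : D ∈ 𝒞) (hC : 24 * 4 ^ indepNum G ≤ (σ : ℤ) * wSum red M C)
    (hD : (σ : ℤ) * wSum red M D ≤ -(24 * 4 ^ indepNum G)) : HasZeroSkipCycleSet G red M 𝒞 := by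
  have hpow : (0 : ℤ) < 4 ^ indepNum G := by positivity
  have hCD : C ≠ D := by
    rintro rfl
    linarith
  obtain ⟨a, -, ha, hskips⟩ := (h𝒞.1 C hC𝒞).exists_hasDisjointSkips hM (q := 4) (σ := σ)
    (by push_cast; linarith)
  obtain ⟨b, hb_two, hb, hskips'⟩ := (h𝒞.1 D hD𝒞).exists_hasDisjointSkips hM (q := 4) (σ := -σ)
    (by push_cast; linarith)
  refine (hskips.mono hb).hasZeroSkipCycleSet_of_add_eq_zero (hskips'.mono ha) hC𝒞 hD𝒞 hCD
    (by omega) ?_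
  push_cast
  ring

theorem lt_card_filter_neg {ι : Type*} {s : Finset ι} {f : ι → ℤ} {B : ℤ} {n : ℕ} {c : ι}
    (hB : ∀ i ∈ s, -B ≤ f i) (hB_nonneg : 0 ≤ B) (hc : c ∈ s) (hc_nonneg : 0 ≤ f c)
    (hf : n * B + ∑ i ∈ s, f i < f c) : n < #{i ∈ s | f i < 0} := by
  by_contra! hcard
  have hneg : #{i ∈ s | f i < 0} • -B ≤ ∑ i ∈ s with f i < 0, f i :=
    card_nsmul_le_sum _ _ _ fun i hi => hB i (mem_filter.1 hi).1
  have hnonneg : f c ≤ ∑ i ∈ s with ¬f i < 0, f i :=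
    single_le_sum (fun i hi => not_lt.1 (mem_filter.1 hi).2)
      (mem_filter.2 ⟨hc, hc_nonneg.not_gt⟩)
  have hmul : #{i ∈ s | f i < 0} * B ≤ n * B := by gcongr
  rw [nsmul_eq_mul] at hneg
  linarith [sum_filter_add_sum_filter_not s (f · < 0) f]

theorem exists_subset_sum_eq_mul {ι : Type*} {s : Finset ι} {f : ι → ℤ} {a B : ℕ} (ha : 0 < a)
    (hs : 2 * a - 1 ≤ #s) (hf : ∀ i ∈ s, 0 ≤ f i) (hfB : ∀ i ∈ s, f i ≤ B) :
    ∃ t ⊆ s, t.Nonempty ∧ ∃ m ≤ B, ∑ i ∈ t, f i = a * m := by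
  obtain ⟨t, hts, hcard, m, hm⟩ := Int.erdos_ginzburg_ziv f hs
  have ha' : (0 : ℤ) < a := mod_cast ha
  have hm_nonneg : 0 ≤ m :=
    nonneg_of_mul_nonneg_right (hm ▸ sum_nonneg fun i hi => hf i (hts hi)) ha'
  have hmB : a * m ≤ a * (B : ℤ) := by
    rw [← hm, ← nsmul_eq_mul, ← hcard]
    exact sum_le_card_nsmul _ _ _ fun i hi => hfB i (hts hi)
  lift m to ℕ using hm_nonneg
  exact ⟨t, hts, card_pos.1 (hcard ▸ ha), m, mod_cast (mul_le_mul_iff_right₀ ha').1 hmB, hm⟩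

theorem HasDisjointSkips.hasZeroSkipCycleSet_of_opposite_light {a B : ℕ} (ha : 0 < a)
    (hskips : HasDisjointSkips G red M C B (-(σ : ℤ) * a)) (hC : C ∈ 𝒞)
    (hC_nonneg : 0 ≤ (σ : ℤ) * wSum red M C)
    (hlight : ∀ D ∈ 𝒞, -(B : ℤ) ≤ (σ : ℤ) * wSum red M D)
    (hcard : 2 * a - 1 ≤ #{D ∈ 𝒞 | (σ : ℤ) * wSum red M D < 0}) :
    HasZeroSkipCycleSet G red M 𝒞 := by
  obtain ⟨𝒟, h𝒟, hne, m, hmB, hm⟩ := exists_subset_sum_eq_mul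
    (f := fun D => -((σ : ℤ) * wSum red M D)) (B := B) ha hcard
    (fun D hD => by linarith [(mem_filter.1 hD).2])
    (fun D hD => by linarith [hlight D (mem_filter.1 hD).1])
  refine (hskips.mono hmB).hasZeroSkipCycleSet_of_eq_sum hC (h𝒟.trans (filter_subset _ _)) hne
    (fun hmem => (mem_filter.1 (h𝒟 hmem)).2.not_ge hC_nonneg) ?_
  rw [sum_neg_distrib, ← mul_sum] at hm
  linear_combination (σ : ℤ) * hm + (∑ D ∈ 𝒟, wSum red M D) * Int.units_coe_mul_self σ

end ZeroSkipCycleSets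

-- The `24 * 4 ^ α` skips on `C` needed against light cycles require weight `6 * 24 * (4 ^ α) ^ 2`,
-- and `hgap` forces more than six opposite cycles, as each contributes at most `24 * 4 ^ α`.
theorem heavy_cycle_gives_zero_skip_cycle_set_general
    {V : Type*} [DecidableEq V] (G : SimpleGraph V) (red : Sym2 V → Bool)
    (M : Finset (Sym2 V)) (hM : IsPM G M)
    (𝒞 : Finset (Finset (Sym2 V))) (h𝒞 : IsAltCycleSet G M 𝒞)
    (C : Finset (Sym2 V)) (hC : C ∈ 𝒞)
    (hbig : 144 * (4 ^ indepNum G) ^ 2 ≤ |wSum red M C|)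
    (hgap : |∑ C' ∈ 𝒞, wSum red M C'| + 144 * 4 ^ indepNum G < |wSum red M C|) :
    HasZeroSkipCycleSet G red M 𝒞 := by
  have hpow : (1 : ℤ) ≤ 4 ^ indepNum G := one_le_pow₀ (by norm_num)
  obtain ⟨σ, hσ⟩ : ∃ σ : ℤˣ, |wSum red M C| = σ * wSum red M C :=
    (abs_choice (wSum red M C)).elim (fun h => ⟨1, by simp [h]⟩) fun h => ⟨-1, by simp [h]⟩
  have hC_nonneg : 0 ≤ (σ : ℤ) * wSum red M C := hσ ▸ abs_nonneg _
  rw [hσ] at hbig hgap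
  by_cases hheavy : ∃ D ∈ 𝒞, (σ : ℤ) * wSum red M D ≤ -(24 * 4 ^ indepNum G)
  · obtain ⟨D, hD𝒞, hD⟩ := hheavy
    exact hasZeroSkipCycleSet_of_opposite_heavy hM h𝒞 hC hD𝒞 (by nlinarith) hD
  push Not at hheavy
  obtain ⟨a, ha_two, ha_four, hskips⟩ := (h𝒞.1 C hC).exists_hasDisjointSkips hM (σ := σ)
    (q := 24 * 4 ^ indepNum G) (by push_cast; linarith)
  have hlight : ∀ D ∈ 𝒞, -((24 * 4 ^ indepNum G : ℕ) : ℤ) ≤ (σ : ℤ) * wSum red M D :=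
    fun D hD => by push_cast; exact (hheavy D hD).le
  have hcard : 6 < #{D ∈ 𝒞 | (σ : ℤ) * wSum red M D < 0} := by
    refine lt_card_filter_neg hlight (by positivity) hC hC_nonneg ?_
    have hsum : ∑ D ∈ 𝒞, (σ : ℤ) * wSum red M D ≤ |∑ D ∈ 𝒞, wSum red M D| := by
      rw [← mul_sum]
      exact (le_abs_self _).trans_eq (by rw [abs_mul, Int.isUnit_iff_abs_eq.1 σ.isUnit, one_mul])
    push_cast
    linarith
  exact hskips.hasZeroSkipCycleSet_of_opposite_light (by omega) hC hC_nonneg hlight (by omega)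

/-- Bounded cycle weights: let `t ≥ 8·4^α` and `t' = 4t²`. If `𝒞` is a set of
vertex-disjoint `M`-alternating cycles with `|w_M(𝒞)| ≤ t'` containing a cycle `C` with
`|w_M(C)| ≥ 2t'`, then `𝒞` contains a 0-skip-cycle set. -/
theorem heavy_cycle_gives_zero_skip_cycle_set
    {V : Type*} [Fintype V] [DecidableEq V] (G : SimpleGraph V) (red : Sym2 V → Bool)
    (t t' : ℕ) (ht : 8 * 4 ^ indepNum G ≤ t) (ht' : t' = 4 * t ^ 2)
    (M : Finset (Sym2 V)) (hM : IsPM G M)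
    (𝒞 : Finset (Finset (Sym2 V))) (h𝒞 : IsAltCycleSet G M 𝒞)
    (C : Finset (Sym2 V)) (hC : C ∈ 𝒞)
    (htot : |∑ C' ∈ 𝒞, wSum red M C'| ≤ (t' : ℤ))
    (hbig : (2 * t' : ℤ) ≤ |wSum red M C|) :
    HasZeroSkipCycleSet G red M 𝒞 := by
  subst ht'
  have hpow : (1 : ℤ) ≤ 4 ^ indepNum G := one_le_pow₀ (by norm_num)
  have ht_sq : (8 * 4 ^ indepNum G : ℤ) ^ 2 ≤ t ^ 2 := mod_cast Nat.pow_le_pow_left ht 2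
  push_cast at htot hbig
  exact heavy_cycle_gives_zero_skip_cycle_set_general G red M hM 𝒞 h𝒞 C hC (by nlinarith)
    (by nlinarith)
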